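/- Let f₀ : ℝⁿ → ℝ be a nonconstant polynomial function that is bounded from below on ℝⁿ and nondegenerate at infinity, and set f* := inf_{x ∈ ℝⁿ} f₀(x). If f₀ does not attain its infimum f* on ℝⁿ, then there exist a point x* ∈ (ℝ∖{0})ⁿ (all coordinates nonzero) and a bad face Δ₀ of Γ(f₀) such that f* = f_{0,Δ₀}(x*) and ∇f_{0,Δ₀}(x*) = 0. -/

import Mathlib

open MvPolynomial Set Filter
open scoped Classical

noncomputable section

/-- The exponent vector of a monomial, viewed as a point of `ℝⁿ`. -/
def expVec {n : ℕ} (κ : Fin n →₀ ℕ) : Fin n → ℝ := fun j => (κ j : ℝ)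

/-- The Newton polyhedron at infinity `Γ(f)`: the convex hull of the support of `f`. -/
def NewtonPolyhedron {n : ℕ} (f : MvPolynomial (Fin n) ℝ) : Set (Fin n → ℝ) :=
  convexHull ℝ (expVec '' (f.support : Set (Fin n →₀ ℕ)))

/-- `d(q, Γ(f)) := min {⟨q, κ⟩ : κ ∈ Γ(f)}`. -/
def NewtonD {n : ℕ} (f : MvPolynomial (Fin n) ℝ) (q : Fin n → ℝ) : ℝ :=
  sInf ((fun κ : Fin n → ℝ => ∑ j, q j * κ j) '' NewtonPolyhedron f)

/-- `Δ(q, Γ(f)) := {κ ∈ Γ(f) : ⟨q, κ⟩ = d(q, Γ(f))}`. -/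
def NewtonFace {n : ℕ} (f : MvPolynomial (Fin n) ℝ) (q : Fin n → ℝ) : Set (Fin n → ℝ) :=
  {κ ∈ NewtonPolyhedron f | ∑ j, q j * κ j = NewtonD f q}

/-- For a set `Δ ⊆ ℝⁿ`, the polynomial `f_Δ := ∑_{κ ∈ Δ} a_κ x^κ`. -/
def facePoly {n : ℕ} (f : MvPolynomial (Fin n) ℝ) (Δ : Set (Fin n → ℝ)) :
    MvPolynomial (Fin n) ℝ :=
  ∑ κ ∈ f.support.filter (fun κ => expVec κ ∈ Δ), monomial κ (f.coeff κ)

/-- `ℝ^J := {x ∈ ℝⁿ : x_j = 0 for all j ∉ J}`. -/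
def RJ {n : ℕ} (J : Set (Fin n)) : Set (Fin n → ℝ) := {x | ∀ j ∉ J, x j = 0}

/-- The restriction of `f` to `ℝ^J` is not constant. -/
def NotConstOn {n : ℕ} (f : MvPolynomial (Fin n) ℝ) (J : Set (Fin n)) : Prop :=
  ∃ x ∈ RJ J, ∃ y ∈ RJ J, eval x f ≠ eval y f

/-- The Mangasarian–Fromovitz property at infinity for `inf {f 0 x : f i x ≤ 0, i = 1,…,p}`. -/
def MFinfty {n p : ℕ} (f : Fin (p + 1) → MvPolynomial (Fin n) ℝ) : Prop :=
  ∀ J : Set (Fin n), J.Nonempty → ∀ q x : Fin n → ℝ,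
    NewtonD (f 0) q < 0 →
    (∀ i, NotConstOn (f i) J → NewtonFace (f i) q ⊆ RJ J) →
    (∀ j, x j = 0 ↔ j ∉ J) →
    (∀ i, i ≠ 0 → eval x (facePoly (f i) (NewtonFace (f i) q)) ≤ 0) →
    ∃ v : Fin n → ℝ, v ≠ 0 ∧ ∀ i, NotConstOn (f i) J →
      eval x (facePoly (f i) (NewtonFace (f i) q)) = 0 →
      ∑ j, eval x (pderiv j (facePoly (f i) (NewtonFace (f i) q))) * v j < 0

/-- Kouchnirenko non-degeneracy at infinity. -/
def NondegenerateAtInfinity {n : ℕ} (f : MvPolynomial (Fin n) ℝ) : Prop :=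
  ∀ q : Fin n → ℝ, NewtonD f q < 0 →
    ∀ x : Fin n → ℝ, (∀ j, x j ≠ 0) →
      ¬ ∀ j, eval x (pderiv j (facePoly f (NewtonFace f q))) = 0

/-- A convenient polynomial. -/
def Convenient {n : ℕ} (f : MvPolynomial (Fin n) ℝ) : Prop :=
  ∀ j : Fin n, ∃ c : ℝ, 0 < c ∧ c • (Pi.single j 1 : Fin n → ℝ) ∈ NewtonPolyhedron f

/-- A bad face of `Γ(f)`. -/
def BadFace {n : ℕ} (f : MvPolynomial (Fin n) ℝ) (Δ : Set (Fin n → ℝ)) : Prop :=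
  (∃ q : Fin n → ℝ, Δ = NewtonFace f q) ∧
  (0 : Fin n → ℝ) ∈ affineSpan ℝ Δ ∧
  ∃ q : Fin n → ℝ, (∃ i j, q i * q j < 0) ∧
    {κ : Fin n → ℝ | ∑ j, q j * κ j = 0} ∩ NewtonPolyhedron f = Δ

/-- The set of critical values of `f`. -/
def K0 {n : ℕ} (f : MvPolynomial (Fin n) ℝ) : Set ℝ :=
  {c | ∃ x : Fin n → ℝ, (∀ j, eval x (pderiv j f) = 0) ∧ eval x f = c}

/-- `Σ∞(f)`: critical values of `f_Δ` over all bad faces `Δ`. -/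
def SigmaInfty {n : ℕ} (f : MvPolynomial (Fin n) ℝ) : Set ℝ :=
  {c | ∃ Δ : Set (Fin n → ℝ), BadFace f Δ ∧ ∃ x : Fin n → ℝ,
    (∀ j, eval x (pderiv j (facePoly f Δ)) = 0) ∧ eval x (facePoly f Δ) = c}

/-- `Σ∞'(f)`: critical values of `f_Δ` on `(ℝ ∖ {0})ⁿ` over all bad faces `Δ`. -/
def SigmaInfty' {n : ℕ} (f : MvPolynomial (Fin n) ℝ) : Set ℝ :=
  {c | ∃ Δ : Set (Fin n → ℝ), BadFace f Δ ∧ ∃ x : Fin n → ℝ, (∀ j, x j ≠ 0) ∧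
    (∀ j, eval x (pderiv j (facePoly f Δ)) = 0) ∧ eval x (facePoly f Δ) = c}

/-- The Euclidean norm on `Fin k → ℝ`. -/
def euclNorm {k : ℕ} (x : Fin k → ℝ) : ℝ := Real.sqrt (∑ j, (x j) ^ 2)

/-- Basic semialgebraic subsets of `ℝ^m`. -/
def BasicSA {m : ℕ} (A : Set (Fin m → ℝ)) : Prop :=
  ∃ (k l : ℕ) (g : Fin k → MvPolynomial (Fin m) ℝ) (h : Fin l → MvPolynomial (Fin m) ℝ),
    A = {x | (∀ i, eval x (g i) = 0) ∧ ∀ i, 0 < eval x (h i)}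

/-- Semialgebraic subsets of `ℝ^m`: finite unions of basic semialgebraic sets. -/
def IsSA {m : ℕ} (A : Set (Fin m → ℝ)) : Prop :=
  ∃ (N : ℕ) (B : Fin N → Set (Fin m → ℝ)), (∀ i, BasicSA (B i)) ∧ A = ⋃ i, B i

/-- A semialgebraic scalar function on a domain `D ⊆ ℝ` (graph is semialgebraic). -/
def IsSAFunOn (D : Set ℝ) (f : ℝ → ℝ) : Prop :=
  IsSA {z : Fin 2 → ℝ | z 0 ∈ D ∧ z 1 = f (z 0)}

/-- A semialgebraic curve `D → ℝⁿ` (graph is semialgebraic). -/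
def IsSACurve {n : ℕ} (D : Set ℝ) (φ : ℝ → Fin n → ℝ) : Prop :=
  IsSA {z : Fin (n + 1) → ℝ | z 0 ∈ D ∧ ∀ j : Fin n, z j.succ = φ (z 0) j}

/-- A semialgebraic map `ℝⁿ → ℝ^p` (graph is semialgebraic). -/
def IsSAMap {n p : ℕ} (F : (Fin n → ℝ) → (Fin p → ℝ)) : Prop :=
  IsSA {z : Fin (n + p) → ℝ |
    (fun i : Fin p => z (Fin.natAdd n i)) = F (fun j : Fin n => z (Fin.castAdd p j))}

/-!
A sequence in the torus `(ℝ ∖ {0})ⁿ` minimizing `f` is, along an ultrafilter and as far as the sizes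
of finitely many Laurent monomials are concerned, indistinguishable in logarithmic coordinates from
a ray `w - s • q`, `s → ∞`. Were `⟨q, κ⟩` negative somewhere on `Γ(f)`, then `f` would be unbounded
along the sequence, because by nondegeneracy its leading part, which is nonnegative as `f` is
bounded below, has no zero in the torus. So `⟨q, κ⟩ ≥ 0` on `Γ(f)`, and the monomials off
`Δ = Γ(f) ∩ {⟨q, κ⟩ = 0}` vanish in the limit: `f* = f_Δ(x*)` for a point `x*` of the torus. Since
every value of `f_Δ` is a limit of values of `f`, the point `x*` minimizes `f_Δ`, hence is critical.

If `Δ` is not bad, `f` attains `f*`. Indeed, if `0` is not in the affine span of `Δ`, then `f_Δ` is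
quasi-homogeneous of nonzero degree, so `f* = 0`, and `0 ∉ Γ(f)` gives `f(0) = 0`. If no two entries
of `q` have opposite signs, then `f_Δ(x*)` is the value of `f` at the point obtained from `x*` by
setting to `0` the coordinates `j` with `q_j ≠ 0`.
-/

open scoped Topology

section Rays

variable {α E : Type*}

theorem ultrafilter_tendsto_atTop_or_atBot_or_nhds (U : Ultrafilter α) (g : α → ℝ) :
    Tendsto g U atTop ∨ Tendsto g U atBot ∨ ∃ c, Tendsto g U (𝓝 c) := by
  obtain ⟨L, hL⟩ : ∃ L, Tendsto (fun a => (g a : EReal)) U (𝓝 L) :=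
    ⟨_, (U.map fun a => (g a : EReal)).le_nhds_lim⟩
  induction L with
  | bot => exact .inr <| .inl <| EReal.tendsto_coe_nhds_bot_iff.1 hL
  | coe c => exact .inr <| .inr ⟨c, EReal.tendsto_coe.1 hL⟩
  | top => exact .inl <| EReal.tendsto_coe_nhds_top_iff.1 hL

theorem exists_linearMap_comp_comp_eq {K V W : Type*} [Field K] [AddCommGroup V] [Module K V]
    [AddCommGroup W] [Module K W] (A : V →ₗ[K] W) : ∃ g : W →ₗ[K] V, A ∘ₗ g ∘ₗ A = A := by
  obtain ⟨s, hs⟩ := A.rangeRestrict.exists_rightInverse_of_surjective A.range_rangeRestrict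
  obtain ⟨g, hg⟩ := s.exists_extend
  refine ⟨g, LinearMap.ext fun v => ?_⟩
  calc A (g (A v)) = A (s (A.rangeRestrict v)) := by rw [← hg]; rfl
    _ = A v := congrArg Subtype.val (LinearMap.congr_fun hs (A.rangeRestrict v))

/-- Along `l`, the scalar function `φ ∘ y` behaves as `φ` does on the ray `w - s • q`, `s → ∞`.
The sign of `q` is that of the weights defining Newton faces: `y` is meant to be the vector of
logarithms of the coordinates of a curve `x_j ≈ x⁰_j t ^ q_j`, where `t = exp (-s) → 0`. -/
structure FollowsRay (l : Filter α) (y : α → E) (q w : E) (φ : E → ℝ) : Prop where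
  tendsto_atBot : 0 < φ q → Tendsto (fun t => φ (y t)) l atBot
  tendsto_nhds : φ q = 0 → Tendsto (fun t => φ (y t)) l (𝓝 (φ w))
  tendsto_atTop : φ q < 0 → Tendsto (fun t => φ (y t)) l atTop

variable [AddCommGroup E] [Module ℝ E]

theorem followsRay_neg_smul (q : E) (φ : Module.Dual ℝ E) :
    FollowsRay atTop (fun s : ℝ => -s • q) q 0 φ where
  tendsto_atBot h := by
    simpa [Function.comp_def] using tendsto_neg_atTop_atBot.comp (tendsto_id.atTop_mul_const h)
  tendsto_nhds h := by simp [h]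
  tendsto_atTop h := by
    simpa [Function.comp_def] using
      tendsto_neg_atBot_atTop.comp (tendsto_id.atTop_mul_const_of_neg h)

theorem exists_followsRay (U : Ultrafilter α) (y : α → E) {Φ : Set (Module.Dual ℝ E)}
    (hΦ : Φ.Finite) : ∃ q w, ∀ φ ∈ Φ, FollowsRay U y q w φ := by
  let C : Set (Module.Dual ℝ E) := {φ ∈ Φ | ∃ c, Tendsto (fun t => φ (y t)) U (𝓝 c)}
  have : Fintype C := (hΦ.subset (sep_subset _ _)).fintype
  choose c hc using fun φ : C => φ.2.2
  let A : E →ₗ[ℝ] C → ℝ := LinearMap.pi Subtype.val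
  obtain ⟨g, hg⟩ := exists_linearMap_comp_comp_eq A
  -- `g (A (y t))` is the part of `y t` that converges, `y t - g (A (y t))` the one that diverges.
  have hlim (φ : Module.Dual ℝ E) : Tendsto (fun t => φ (g (A (y t)))) U (𝓝 (φ (g c))) :=
    ((φ ∘ₗ g).continuous_of_finiteDimensional.tendsto c).comp (tendsto_pi_nhds.2 hc)
  have hsame (φ : C) (z : E) : φ.1 (g (A z)) = φ.1 z := congrFun (LinearMap.congr_fun hg z) φ
  have hsign : ∀ᶠ t in (U : Filter α), ∀ φ ∈ Φ,
      (Tendsto (fun t => φ (y t)) U atTop → φ (g (A (y t))) < φ (y t)) ∧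
      (Tendsto (fun t => φ (y t)) U atBot → φ (y t) < φ (g (A (y t)))) := by
    refine (eventually_all_finite hΦ).2 fun φ _ => .and ?_ ?_ <;>
      refine eventually_imp_distrib_left.2 fun h => ?_
    · filter_upwards [(h.atTop_add (hlim φ).neg).eventually_gt_atTop 0] with t ht using by linarith
    · filter_upwards [(h.atBot_add (hlim φ).neg).eventually_lt_atBot 0] with t ht using by linarith
  obtain ⟨t, ht⟩ := hsign.exists
  refine ⟨g (A (y t)) - y t, g c, fun φ hφ => ?_⟩
  rcases ultrafilter_tendsto_atTop_or_atBot_or_nhds U (fun t => φ (y t)) with h | h | h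
  · have : φ (g (A (y t)) - y t) < 0 := by simpa using (ht φ hφ).1 h
    exact ⟨fun h' => by linarith, fun h' => by linarith, fun _ => h⟩
  · have : 0 < φ (g (A (y t)) - y t) := by simpa using (ht φ hφ).2 h
    exact ⟨fun _ => h, fun h' => by linarith, fun h' => by linarith⟩
  · have hzero : φ (g (A (y t)) - y t) = 0 := by
      rw [map_sub, hsame ⟨φ, hφ, h⟩, sub_self]
    refine ⟨fun h' => by linarith, fun _ => ?_, fun h' => by linarith⟩
    simpa only [hsame ⟨φ, hφ, h⟩] using hlim φ

end Rays

theorem exists_dual_eq_one_of_zero_notMem_affineSpan {K V : Type*} [Field K] [AddCommGroup V]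
    [Module K V] {D : Set V} (hD : (0 : V) ∉ affineSpan K D) :
    ∃ φ : Module.Dual K V, ∀ z ∈ D, φ z = 1 := by
  obtain rfl | ⟨a, ha⟩ := D.eq_empty_or_nonempty
  · simp
  have haD : a ∉ vectorSpan K D := fun hv => hD <| by
    have h := vadd_mem_spanPoints_of_mem_spanPoints_of_mem_vectorSpan K
      (subset_affineSpan K D ha) (neg_mem hv)
    rwa [vadd_eq_add, neg_add_cancel] at h
  obtain ⟨φ, hφa, hφ⟩ := Submodule.exists_le_ker_of_notMem haD
  refine ⟨(φ a)⁻¹ • φ, fun z hz => ?_⟩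
  have hza : φ z = φ a := by
    simpa [sub_eq_zero] using LinearMap.mem_ker.1 (hφ (vsub_mem_vectorSpan K hz ha))
  simp [hza, hφa]

theorem hasDerivAt_eval_update {σ 𝕜 : Type*} [DecidableEq σ] [NontriviallyNormedField 𝕜]
    (p : MvPolynomial σ 𝕜) (x : σ → 𝕜) (j : σ) :
    HasDerivAt (fun t => eval (Function.update x j t) p) (eval x (pderiv j p)) (x j) := by
  induction p using MvPolynomial.induction_on with
  | C a => simpa using hasDerivAt_const _ _
  | add p q hp hq => simpa using hp.fun_add hq
  | mul_X p i hp =>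
    have hX : HasDerivAt (fun t => Function.update x j t i)
        (eval x (pderiv j (X i : MvPolynomial σ 𝕜))) (x j) := by
      obtain rfl | hij := eq_or_ne i j
      · simpa using hasDerivAt_id' _
      · simpa [hij, pderiv_X_of_ne hij.symm] using hasDerivAt_const _ _
    simpa [add_comm, mul_comm] using hp.fun_mul hX

theorem eval_pderiv_eq_zero_of_forall_le {σ : Type*} {p : MvPolynomial σ ℝ} {x : σ → ℝ}
    (hmin : ∀ z, eval x p ≤ eval z p) (j : σ) : eval x (pderiv j p) = 0 := by
  classical
  refine IsLocalMin.hasDerivAt_eq_zero (.of_forall fun t => ?_) (hasDerivAt_eval_update p x j)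
  simpa using hmin _

theorem dotProduct_eq_zero_iff_of_mul_nonneg {ι R : Type*} [Fintype ι] [Ring R] [LinearOrder R]
    [IsStrictOrderedRing R] {q κ : ι → R} (hq : ∀ i j, 0 ≤ q i * q j) (hκ : 0 ≤ κ) :
    q ⬝ᵥ κ = 0 ↔ ∀ j, q j * κ j = 0 := by
  have hsign : (∀ j, 0 ≤ q j) ∨ ∀ j, q j ≤ 0 := by
    by_contra! ⟨⟨i, hi⟩, j, hj⟩
    exact (hq i j).not_gt (mul_neg_of_neg_of_pos hi hj)
  rcases hsign with h | h
  · simp [dotProduct, Finset.sum_eq_zero_iff_of_nonneg fun j _ => mul_nonneg (h j) (hκ j)]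
  · simp [dotProduct, Finset.sum_eq_zero_iff_of_nonpos fun j _ =>
      mul_nonpos_of_nonpos_of_nonneg (h j) (hκ j)]

theorem eval_monomial_eq_mul_prod_pow {σ R : Type*} [Fintype σ] [CommSemiring R] (x : σ → R)
    (κ : σ →₀ ℕ) (a : R) : eval x (monomial κ a) = a * ∏ j, x j ^ κ j := by
  rw [eval_monomial, Finsupp.prod_fintype _ _ fun _ => pow_zero _]

variable {n : ℕ}

section ExpScale

/-- The point `(exp y₁ x₁, …, exp yₙ xₙ)`: the action on `x` of the identity component of the torus
`(ℝ ∖ {0})ⁿ`, in logarithmic coordinates. -/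
def expScale (y x : Fin n → ℝ) : Fin n → ℝ := fun j => Real.exp (y j) * x j

theorem expScale_ne_zero {x : Fin n → ℝ} (y : Fin n → ℝ) (hx : ∀ j, x j ≠ 0) (j : Fin n) :
    expScale y x j ≠ 0 :=
  mul_ne_zero (Real.exp_ne_zero _) (hx j)

theorem zero_expScale (x : Fin n → ℝ) : expScale 0 x = x := by
  ext j
  simp [expScale]

theorem expScale_log_abs_sign {x : Fin n → ℝ} (hx : ∀ j, x j ≠ 0) :
    expScale (fun j => Real.log |x j|) (fun j => SignType.sign (x j)) = x := by
  ext j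
  rw [expScale, Real.exp_log (abs_pos.2 (hx j)), abs_mul_sign]

theorem eval_expScale_monomial (y x : Fin n → ℝ) (κ : Fin n →₀ ℕ) (a : ℝ) :
    eval (expScale y x) (monomial κ a) =
      Real.exp (y ⬝ᵥ expVec κ) * eval x (monomial κ a) := by
  simp only [eval_monomial_eq_mul_prod_pow, expScale, mul_pow, Finset.prod_mul_distrib, dotProduct,
    expVec, Real.exp_sum, mul_comm (y _), Real.exp_nat_mul]
  ring

end ExpScale

section FacePoly

variable {f : MvPolynomial (Fin n) ℝ} {Δ : Set (Fin n → ℝ)}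

theorem expVec_mem_newtonPolyhedron {κ : Fin n →₀ ℕ} (hκ : κ ∈ f.support) :
    expVec κ ∈ NewtonPolyhedron f :=
  subset_convexHull ℝ _ ⟨κ, hκ, rfl⟩

theorem zero_mem_newtonPolyhedron_of_eval_zero_ne_zero (hf : eval 0 f ≠ 0) :
    0 ∈ NewtonPolyhedron f := by
  rw [eval_zero, constantCoeff_eq, ← mem_support_iff] at hf
  convert expVec_mem_newtonPolyhedron hf
  ext j
  simp [expVec]

theorem le_dotProduct_of_mem_newtonPolyhedron {q z : Fin n → ℝ} {c : ℝ}
    (hc : ∀ κ ∈ f.support, c ≤ q ⬝ᵥ expVec κ) (hz : z ∈ NewtonPolyhedron f) : c ≤ q ⬝ᵥ z := by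
  have hconv : Convex ℝ {z : Fin n → ℝ | c ≤ q ⬝ᵥ z} :=
    convex_halfSpace_ge (dotProductBilin ℝ ℝ q).isLinear c
  refine convexHull_min ?_ hconv hz
  rintro _ ⟨κ, hκ, rfl⟩
  exact hc κ hκ

theorem newtonD_eq {q z : Fin n → ℝ} (hz : z ∈ NewtonPolyhedron f)
    (hmin : ∀ κ ∈ f.support, q ⬝ᵥ z ≤ q ⬝ᵥ expVec κ) : NewtonD f q = q ⬝ᵥ z := by
  refine IsLeast.csInf_eq ⟨⟨z, hz, rfl⟩, ?_⟩
  rintro _ ⟨z', hz', rfl⟩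
  exact le_dotProduct_of_mem_newtonPolyhedron hmin hz'

theorem facePoly_inter_newtonPolyhedron (f : MvPolynomial (Fin n) ℝ) (Δ : Set (Fin n → ℝ)) :
    facePoly f (Δ ∩ NewtonPolyhedron f) = facePoly f Δ := by
  unfold facePoly
  congr! 2 with κ hκ
  exact and_iff_left (expVec_mem_newtonPolyhedron hκ)

theorem facePoly_newtonFace {q b : Fin n → ℝ} (hb : b ∈ NewtonPolyhedron f)
    (hmin : ∀ κ ∈ f.support, q ⬝ᵥ b ≤ q ⬝ᵥ expVec κ) :
    facePoly f (NewtonFace f q) = facePoly f {κ | q ⬝ᵥ κ = q ⬝ᵥ b} := by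
  rw [← facePoly_inter_newtonPolyhedron f {κ | q ⬝ᵥ κ = q ⬝ᵥ b}, inter_comm, ← newtonD_eq hb hmin]
  rfl

theorem eval_expScale_facePoly {p : Fin n → ℝ} {c : ℝ} (hp : ∀ z ∈ Δ, p ⬝ᵥ z = c)
    (x : Fin n → ℝ) :
    eval (expScale p x) (facePoly f Δ) = Real.exp c * eval x (facePoly f Δ) := by
  simp only [facePoly, map_sum, Finset.mul_sum]
  refine Finset.sum_congr rfl fun κ hκ => ?_
  rw [eval_expScale_monomial, hp _ (Finset.mem_filter.1 hκ).2]

theorem eval_facePoly_eq_zero_of_zero_notMem_affineSpan (hΔ : (0 : Fin n → ℝ) ∉ affineSpan ℝ Δ)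
    {x : Fin n → ℝ} (hmin : ∀ z, eval x (facePoly f Δ) ≤ eval z (facePoly f Δ)) :
    eval x (facePoly f Δ) = 0 := by
  obtain ⟨φ, hφ⟩ := exists_dual_eq_one_of_zero_notMem_affineSpan hΔ
  obtain ⟨p, rfl⟩ := (dotProductEquiv ℝ (Fin n)).surjective φ
  have hscale (s : ℝ) : eval x (facePoly f Δ) ≤ Real.exp s * eval x (facePoly f Δ) := by
    rw [← eval_expScale_facePoly (p := s • p) fun z hz => ?_]
    · exact hmin _
    · simpa using congrArg (s * ·) (hφ z hz)
  have h₁ := hscale 1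
  have h₂ := hscale (-1)
  have hexp : 1 < Real.exp 1 := Real.one_lt_exp_iff.2 one_pos
  have hexp' : Real.exp (-1) < 1 := Real.exp_lt_one_iff.2 (by norm_num)
  exact le_antisymm (by nlinarith) (by nlinarith)

/-- The monomials off the hyperplane tend to `0`, those on it to their value at `expScale w x`. -/
theorem tendsto_exp_mul_eval_of_followsRay {α : Type*} {l : Filter α} {y : α → Fin n → ℝ}
    {q w b : Fin n → ℝ} (hmin : ∀ κ ∈ f.support, q ⬝ᵥ b ≤ q ⬝ᵥ expVec κ)
    (hray : ∀ κ ∈ f.support, FollowsRay l y q w (· ⬝ᵥ (expVec κ - b))) (x : Fin n → ℝ) :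
    Tendsto (fun t => Real.exp ((w - y t) ⬝ᵥ b) * eval (expScale (y t) x) f) l
      (𝓝 (eval (expScale w x) (facePoly f {κ | q ⬝ᵥ κ = q ⬝ᵥ b}))) := by
  have hsplit (t : α) : Real.exp ((w - y t) ⬝ᵥ b) * eval (expScale (y t) x) f =
      ∑ κ ∈ f.support, Real.exp (w ⬝ᵥ b) * Real.exp (y t ⬝ᵥ (expVec κ - b)) *
        eval x (monomial κ (f.coeff κ)) := by
    conv_lhs => rw [f.as_sum, map_sum, Finset.mul_sum]
    refine Finset.sum_congr rfl fun κ _ => ?_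
    rw [eval_expScale_monomial, ← mul_assoc, ← Real.exp_add, ← Real.exp_add, sub_dotProduct,
      dotProduct_sub]
    ring_nf
  simp only [hsplit, facePoly, map_sum, Finset.sum_filter, mem_ofPred_eq]
  refine tendsto_finsetSum _ fun κ hκ => ?_
  split_ifs with hκb
  · have h := (hray κ hκ).tendsto_nhds (by simp [dotProduct_sub, hκb])
    rw [eval_expScale_monomial, ← add_sub_cancel (w ⬝ᵥ b) (w ⬝ᵥ expVec κ), Real.exp_add,
      ← dotProduct_sub]
    exact (((Real.continuous_exp.tendsto _).comp h).const_mul _).mul_const _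
  · have h := (hray κ hκ).tendsto_atBot <| by
      simpa [dotProduct_sub] using lt_of_le_of_ne (hmin κ hκ) (Ne.symm hκb)
    simpa using ((Real.tendsto_exp_atBot.comp h).const_mul (Real.exp (w ⬝ᵥ b))).mul_const
      (eval x (monomial κ (f.coeff κ)))

theorem tendsto_exp_mul_eval_neg_smul {q b : Fin n → ℝ}
    (hmin : ∀ κ ∈ f.support, q ⬝ᵥ b ≤ q ⬝ᵥ expVec κ) (x : Fin n → ℝ) :
    Tendsto (fun s : ℝ => Real.exp (s * (q ⬝ᵥ b)) * eval (expScale (-s • q) x) f) atTop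
      (𝓝 (eval x (facePoly f {κ | q ⬝ᵥ κ = q ⬝ᵥ b}))) := by
  have hray (κ : Fin n →₀ ℕ) (_ : κ ∈ f.support) :
      FollowsRay atTop (fun s : ℝ => -s • q) q 0 (· ⬝ᵥ (expVec κ - b)) :=
    followsRay_neg_smul q ((dotProductBilin ℝ ℝ).flip (expVec κ - b))
  simpa [zero_expScale] using tendsto_exp_mul_eval_of_followsRay hmin hray x

variable {m : ℝ}

theorem le_eval_facePoly_of_le_eval (hm : ∀ x, m ≤ eval x f) {q : Fin n → ℝ}
    (hq : ∀ κ ∈ f.support, 0 ≤ q ⬝ᵥ expVec κ) (x : Fin n → ℝ) :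
    m ≤ eval x (facePoly f {κ | q ⬝ᵥ κ = 0}) := by
  have h := tendsto_exp_mul_eval_neg_smul (b := 0) (by simpa using hq) x
  simp only [dotProduct_zero, mul_zero, Real.exp_zero, one_mul] at h
  exact ge_of_tendsto' h fun _ => hm _

theorem eval_facePoly_nonneg_of_le_eval (hm : ∀ x, m ≤ eval x f) {q b : Fin n → ℝ}
    (hmin : ∀ κ ∈ f.support, q ⬝ᵥ b ≤ q ⬝ᵥ expVec κ) (hb : q ⬝ᵥ b < 0) (x : Fin n → ℝ) :
    0 ≤ eval x (facePoly f {κ | q ⬝ᵥ κ = q ⬝ᵥ b}) := by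
  have hzero : Tendsto (fun s : ℝ => Real.exp (s * (q ⬝ᵥ b)) * m) atTop (𝓝 0) := by
    simpa using (Real.tendsto_exp_atBot.comp (tendsto_id.atTop_mul_const_of_neg hb)).mul_const m
  exact le_of_tendsto_of_tendsto' hzero (tendsto_exp_mul_eval_neg_smul hmin x) fun _ =>
    mul_le_mul_of_nonneg_left (hm _) (Real.exp_pos _).le

/-- A zero of the nonnegative polynomial `f_Δ` would be a minimizer, hence a critical point. -/
theorem NondegenerateAtInfinity.eval_facePoly_ne_zero (hnd : NondegenerateAtInfinity f)
    (hm : ∀ x, m ≤ eval x f) {q b : Fin n → ℝ} (hbf : b ∈ NewtonPolyhedron f)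
    (hmin : ∀ κ ∈ f.support, q ⬝ᵥ b ≤ q ⬝ᵥ expVec κ) (hb : q ⬝ᵥ b < 0)
    {x : Fin n → ℝ} (hx : ∀ j, x j ≠ 0) : eval x (facePoly f {κ | q ⬝ᵥ κ = q ⬝ᵥ b}) ≠ 0 := by
  intro hzero
  refine hnd q (by rwa [newtonD_eq hbf hmin]) x hx (eval_pderiv_eq_zero_of_forall_le fun z => ?_)
  rw [facePoly_newtonFace hbf hmin, hzero]
  exact eval_facePoly_nonneg_of_le_eval hm hmin hb z

theorem eval_facePoly_eq_eval_ite_of_mul_nonneg {q : Fin n → ℝ} (hq : ∀ i j, 0 ≤ q i * q j)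
    (x : Fin n → ℝ) :
    eval x (facePoly f {κ | q ⬝ᵥ κ = 0}) = eval (fun j => if q j = 0 then x j else 0) f := by
  conv_rhs => rw [f.as_sum]
  rw [facePoly, map_sum, map_sum, Finset.sum_filter]
  simp only [mem_ofPred_eq, eval_monomial_eq_mul_prod_pow]
  refine Finset.sum_congr rfl fun κ _ => ?_
  have hiff : q ⬝ᵥ expVec κ = 0 ↔ ∀ j, q j * expVec κ j = 0 :=
    dotProduct_eq_zero_iff_of_mul_nonneg hq fun _ => Nat.cast_nonneg _
  split_ifs with hκ
  · congr 1
    refine Finset.prod_congr rfl fun j _ => ?_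
    rcases mul_eq_zero.1 (hiff.1 hκ j) with hj | hj
    · rw [if_pos hj]
    · rw [Nat.cast_eq_zero.1 hj, pow_zero, pow_zero]
  · obtain ⟨j, hj⟩ := not_forall.1 (hiff.not.1 hκ)
    have hj := mul_ne_zero_iff.1 hj
    rw [Finset.prod_eq_zero (Finset.mem_univ j), mul_zero]
    rw [if_neg hj.1, zero_pow (Nat.cast_ne_zero.1 hj.2)]

end FacePoly

theorem exists_seq_mem_tendsto_of_isGLB_range {X : Type*} [TopologicalSpace X] [Nonempty X]
    {f : X → ℝ} (hf : Continuous f) {S : Set X} (hS : Dense S) {m : ℝ} (hm : IsGLB (range f) m) :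
    ∃ x : ℕ → X, (∀ k, x k ∈ S) ∧ Tendsto (fun k => f (x k)) atTop (𝓝 m) := by
  have hmem : m ∈ closure (f '' S) :=
    closure_minimal (hf.range_subset_closure_image_dense hS) isClosed_closure
      (hm.mem_closure (range_nonempty f))
  obtain ⟨u, hu, hlim⟩ := mem_closure_iff_seq_limit.1 hmem
  choose x hx hxu using hu
  exact ⟨x, hx, by simpa only [hxu] using hlim⟩

theorem dense_forall_ne_zero {ι : Type*} : Dense {x : ι → ℝ | ∀ j, x j ≠ 0} := by
  simpa [Set.pi] using dense_pi univ fun (_ : ι) _ => dense_compl_singleton (0 : ℝ)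

theorem exists_eventually_expScale_log_abs_eq {α : Type*} (U : Ultrafilter α)
    {x : α → Fin n → ℝ} (hx : ∀ t j, x t j ≠ 0) :
    ∃ σ : Fin n → ℝ, (∀ j, σ j ≠ 0) ∧
      ∀ᶠ t in (U : Filter α), expScale (fun j => Real.log |x t j|) σ = x t := by
  have hsign : ∀ᶠ t in (U : Filter α), ∃ s : Fin n → SignType, ∀ j, SignType.sign (x t j) = s j :=
    .of_forall fun t => ⟨_, fun _ => rfl⟩
  obtain ⟨s, hs⟩ := Ultrafilter.eventually_exists_iff.1 hsign
  obtain ⟨t₀, ht₀⟩ := hs.exists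
  refine ⟨fun j => s j, fun j => ?_, ?_⟩
  · exact fun h : (s j : ℝ) = 0 => hx t₀ j (by rw [← abs_mul_sign (x t₀ j), ht₀ j, h, mul_zero])
  · filter_upwards [hs] with t ht
    simpa only [ht] using expScale_log_abs_sign (hx t)

variable {f : MvPolynomial (Fin n) ℝ} {m : ℝ}

theorem NondegenerateAtInfinity.dotProduct_nonneg_of_followsRay (hnd : NondegenerateAtInfinity f)
    (hm : ∀ x, m ≤ eval x f) {α : Type*} {l : Filter α} [l.NeBot] {y : α → Fin n → ℝ}
    {q w σ : Fin n → ℝ} (hσ : ∀ j, σ j ≠ 0)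
    (hray : ∀ κ ∈ f.support, FollowsRay l y q w (· ⬝ᵥ expVec κ))
    (hdiff : ∀ κ ∈ f.support, ∀ κ' ∈ f.support,
      FollowsRay l y q w (· ⬝ᵥ (expVec κ - expVec κ')))
    {c : ℝ} (hlim : Tendsto (fun t => eval (expScale (y t) σ) f) l (𝓝 c)) :
    ∀ κ ∈ f.support, 0 ≤ q ⬝ᵥ expVec κ := by
  intro κ hκ
  obtain ⟨κ₀, hκ₀, hmin⟩ :=
    f.support.exists_min_image (fun κ => q ⬝ᵥ expVec κ) ⟨κ, hκ⟩
  refine le_trans (le_of_not_gt fun hneg => ?_) (hmin κ hκ)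
  have hvanish : Tendsto (fun t => Real.exp ((w - y t) ⬝ᵥ expVec κ₀)) l (𝓝 0) := by
    simp only [sub_dotProduct]
    exact Real.tendsto_exp_atBot.comp <|
      tendsto_atBot_add_const_left _ _ <|
        tendsto_neg_atTop_atBot.comp ((hray κ₀ hκ₀).tendsto_atTop hneg)
  refine hnd.eval_facePoly_ne_zero hm (expVec_mem_newtonPolyhedron hκ₀) hmin hneg
    (expScale_ne_zero w hσ) (tendsto_nhds_unique
      (tendsto_exp_mul_eval_of_followsRay hmin (fun κ hκ => hdiff κ hκ κ₀ hκ₀) σ) ?_)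
  simpa using hvanish.mul hlim

theorem NondegenerateAtInfinity.exists_eval_facePoly_eq (hnd : NondegenerateAtInfinity f)
    (hm : IsGLB (range fun x => eval x f) m) :
    ∃ q x : Fin n → ℝ, (∀ j, x j ≠ 0) ∧ (∀ κ ∈ f.support, 0 ≤ q ⬝ᵥ expVec κ) ∧
      eval x (facePoly f {κ | q ⬝ᵥ κ = 0}) = m := by
  obtain ⟨x, hx, hxm⟩ :=
    exists_seq_mem_tendsto_of_isGLB_range (continuous_eval f) dense_forall_ne_zero hm
  obtain ⟨σ, hσ, hxσ⟩ := exists_eventually_expScale_log_abs_eq (hyperfilter ℕ) hx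
  set y : ℕ → Fin n → ℝ := fun k j => Real.log |x k j|
  have hlim : Tendsto (fun k => eval (expScale (y k) σ) f) (hyperfilter ℕ) (𝓝 m) :=
    (hxm.mono_left Nat.hyperfilter_le_atTop).congr' <| by
      filter_upwards [hxσ] with k hk using by rw [hk]
  let S : Finset (Fin n → ℝ) := insert 0 (f.support.image expVec)
  obtain ⟨q, w, hqw⟩ := exists_followsRay (hyperfilter ℕ) y
    ((S.finite_toSet.image2 (· - ·) S.finite_toSet).image (dotProductBilin ℝ ℝ).flip)
  have hS {κ : Fin n →₀ ℕ} (hκ : κ ∈ f.support) : expVec κ ∈ S :=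
    Finset.mem_insert_of_mem (Finset.mem_image_of_mem _ hκ)
  have hdiff {a b : Fin n → ℝ} (ha : a ∈ S) (hb : b ∈ S) :
      FollowsRay (hyperfilter ℕ) y q w (· ⬝ᵥ (a - b)) :=
    hqw _ (mem_image_of_mem _ (mem_image2_of_mem ha hb))
  have hray (κ : Fin n →₀ ℕ) (hκ : κ ∈ f.support) :=
    hdiff (hS hκ) (Finset.mem_insert_self 0 _)
  have hq := hnd.dotProduct_nonneg_of_followsRay (fun x => hm.1 ⟨x, rfl⟩) hσ
    (by simpa only [sub_zero] using hray) (fun κ hκ κ' hκ' => hdiff (hS hκ) (hS hκ')) hlim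
  refine ⟨q, expScale w σ, expScale_ne_zero w hσ, hq, tendsto_nhds_unique ?_ hlim⟩
  simpa using tendsto_exp_mul_eval_of_followsRay (by simpa using hq) hray σ

theorem badFace_of_dotProduct_nonneg {q : Fin n → ℝ}
    (hq : ∀ κ ∈ f.support, 0 ≤ q ⬝ᵥ expVec κ) (hsign : ∃ i j, q i * q j < 0)
    (hspan : (0 : Fin n → ℝ) ∈ affineSpan ℝ ({κ | q ⬝ᵥ κ = 0} ∩ NewtonPolyhedron f)) :
    BadFace f ({κ | q ⬝ᵥ κ = 0} ∩ NewtonPolyhedron f) := by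
  obtain ⟨z, hqz, hz⟩ := (affineSpan_nonempty ℝ).1 ⟨_, hspan⟩
  refine ⟨⟨q, ?_⟩, hspan, q, hsign, rfl⟩
  have hD : NewtonD f q = 0 := (newtonD_eq hz (by rwa [hqz])).trans hqz
  rw [NewtonFace, hD, inter_comm]
  rfl

/-- **Theorem 4.1 (Fermat's theorem at infinity).** -/
theorem fermat_at_infinity {n : ℕ} (f₀ : MvPolynomial (Fin n) ℝ)
    (hnc : ∃ x y : Fin n → ℝ, eval x f₀ ≠ eval y f₀)
    (hbdd : BddBelow (Set.range fun x : Fin n → ℝ => eval x f₀))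
    (hnd : NondegenerateAtInfinity f₀)
    (fstar : ℝ) (hfstar : fstar = sInf (Set.range fun x : Fin n → ℝ => eval x f₀))
    (hnotatt : ∀ x : Fin n → ℝ, eval x f₀ ≠ fstar) :
    ∃ (xs : Fin n → ℝ) (Δ₀ : Set (Fin n → ℝ)),
      (∀ j, xs j ≠ 0) ∧ BadFace f₀ Δ₀ ∧
      fstar = eval xs (facePoly f₀ Δ₀) ∧
      ∀ j, eval xs (pderiv j (facePoly f₀ Δ₀)) = 0 := by
  have hglb : IsGLB (range fun x => eval x f₀) fstar :=
    hfstar ▸ isGLB_csInf (range_nonempty _) hbdd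
  obtain ⟨q, x, hx, hq, hxf⟩ := hnd.exists_eval_facePoly_eq hglb
  have hmin (z) : eval x (facePoly f₀ {κ | q ⬝ᵥ κ = 0}) ≤ eval z (facePoly f₀ {κ | q ⬝ᵥ κ = 0}) :=
    hxf ▸ le_eval_facePoly_of_le_eval (fun z => hglb.1 ⟨z, rfl⟩) hq z
  have hsign : ∃ i j, q i * q j < 0 := by
    by_contra! hsame
    exact hnotatt _ ((eval_facePoly_eq_eval_ite_of_mul_nonneg hsame x).symm.trans hxf)
  have hspan : 0 ∈ affineSpan ℝ ({κ | q ⬝ᵥ κ = 0} ∩ NewtonPolyhedron f₀) := by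
    by_contra h
    rw [← facePoly_inter_newtonPolyhedron] at hmin hxf
    have hstar : fstar = 0 := hxf ▸ eval_facePoly_eq_zero_of_zero_notMem_affineSpan h hmin
    exact h <| subset_affineSpan ℝ _
      ⟨dotProduct_zero q, zero_mem_newtonPolyhedron_of_eval_zero_ne_zero (hstar ▸ hnotatt 0)⟩
  refine ⟨x, _, hx, badFace_of_dotProduct_nonneg hq hsign hspan, ?_⟩
  rw [facePoly_inter_newtonPolyhedron]
  exact ⟨hxf.symm, eval_pderiv_eq_zero_of_forall_le hmin⟩
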